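/- Let s_n be the number of walks of length n with steps in {(0,1),(1,−1),(0,−1),(−1,−1)} (the model N, SE, S, SW), beginning at the origin and confined to ℕ². Then there is a constant c > 0 such that for all n ≥ 1, | s_n · (2√3)^{−n} · n² − κ_n | ≤ c/n, where κ_n = 12√3/π when n is even and κ_n = 18/π when n is odd. -/

import Mathlib

open Finset

/-- The number of walks of length `n` with steps in the set `S ⊆ ℤ^d`, beginning at
the origin and confined to the non-negative orthant `ℕ^d`. -/
noncomputable def walkCount (d : ℕ) (S : Set (Fin d → ℤ)) (n : ℕ) : ℕ :=
  Nat.card {u : Fin n → (Fin d → ℤ) //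
    (∀ k : Fin n, u k ∈ S) ∧
    ∀ k : Fin n, ∀ m : Fin d, 0 ≤ ∑ j ∈ Finset.Iic k, u j m}

/-!
The vertical coordinate of a walk performs a ballot path, and each of its down steps carries an
independent horizontal step from `{-1, 0, 1}`; hence `s_n` is the sum over the number `k` of down
steps of a ballot number times the number of Motzkin walks of length `k`. The ballot number is
explicit by the reflection principle. The Chebyshev polynomials of the second kind diagonalize the
transfer operator of the Motzkin walks, so their number is `4 / π` times the integral of
`(3 - 4 s²)ᵏ √(1 - s²)` over `[0, 1]`, and Laplace's method, with Wallis' product for the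
constants, gives `3ᵏ √(3 / (π k))` up to a factor `1 + O(1 / k)`. Since `3ᵏ` favours large `k`,
write `n = 2 m + p` and `k = m - j`: the summand decays like `3⁻ʲ` in the shortfall `j`, and its
rate of convergence as `m → ∞` degrades only polynomially in `j`. So the sum converges at rate
`1 / n` to the sum over `j` of the limits, which depends on the parity `p`.
-/

/-! ### Walks confined to an orthant -/

section ConfinedWalks

variable {d : ℕ}

/-- The step sequences of length `n` with steps in `S` whose walk from `x` stays in the orthant
`ℕ^d`. The starting point is required to lie in the orthant as well, so there is none from a
point outside. -/
def confinedWalks (S : Set (Fin d → ℤ)) (x : Fin d → ℤ) (n : ℕ) : Set (Fin n → Fin d → ℤ) :=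
  {u | 0 ≤ x ∧ (∀ k, u k ∈ S) ∧ ∀ k, 0 ≤ x + ∑ j ∈ Iic k, u j}

/-- The number of walks of length `n` with steps in `S` from `x` confined to `ℕ^d`; it is `0` when
`x` lies outside `ℕ^d`. -/
noncomputable def walkCountFrom (S : Set (Fin d → ℤ)) (x : Fin d → ℤ) (n : ℕ) : ℕ :=
  Nat.card (confinedWalks S x n)

lemma walkCount_eq_walkCountFrom_zero (S : Set (Fin d → ℤ)) (n : ℕ) :
    walkCount d S n = walkCountFrom S 0 n := by
  simp only [walkCount, walkCountFrom, confinedWalks, le_refl, true_and, zero_add, Pi.le_def,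
    Finset.sum_apply, Pi.zero_apply, Set.coe_ofPred]

lemma sum_Iic_succ {M : Type*} [AddCommMonoid M] {n : ℕ} (k : Fin n) (f : Fin (n + 1) → M) :
    ∑ j ∈ Iic k.succ, f j = f 0 + ∑ j ∈ Iic k, f j.succ := by
  simp only [← filter_ge_eq_Iic, sum_filter, Fin.sum_univ_succ, Fin.zero_le, if_true,
    Fin.succ_le_succ_iff]

lemma cons_mem_confinedWalks {S : Set (Fin d → ℤ)} {x s : Fin d → ℤ} {n : ℕ}
    {u : Fin n → Fin d → ℤ} :
    (Fin.cons s u : Fin (n + 1) → Fin d → ℤ) ∈ confinedWalks S x (n + 1) ↔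
      0 ≤ x ∧ s ∈ S ∧ u ∈ confinedWalks S (x + s) n := by
  have hIic : Iic (0 : Fin (n + 1)) = {0} := by ext; simp
  simp only [confinedWalks, Set.mem_ofPred_eq, Fin.forall_fin_succ, sum_Iic_succ, hIic,
    sum_singleton, Fin.cons_zero, Fin.cons_succ, add_assoc]
  tauto

lemma finite_confinedWalks (S : Finset (Fin d → ℤ)) (x : Fin d → ℤ) (n : ℕ) :
    (confinedWalks (S : Set (Fin d → ℤ)) x n).Finite :=
  (Set.Finite.pi' fun _ => S.finite_toSet).subset fun _ hu => hu.2.1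

lemma walkCountFrom_zero {S : Set (Fin d → ℤ)} {x : Fin d → ℤ} (hx : 0 ≤ x) :
    walkCountFrom S x 0 = 1 := by
  simp [walkCountFrom, confinedWalks, hx]

lemma walkCountFrom_of_not_nonneg {S : Set (Fin d → ℤ)} {x : Fin d → ℤ} (hx : ¬ 0 ≤ x) (n : ℕ) :
    walkCountFrom S x n = 0 := by
  simp [walkCountFrom, confinedWalks, hx]

lemma walkCountFrom_succ (S : Finset (Fin d → ℤ)) {x : Fin d → ℤ} (hx : 0 ≤ x) (n : ℕ) :
    walkCountFrom S x (n + 1) = ∑ s ∈ S, walkCountFrom S (x + s) n := by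
  let firstStep : confinedWalks (S : Set (Fin d → ℤ)) x (n + 1) ≃
      Σ s : S, confinedWalks (S : Set (Fin d → ℤ)) (x + s) n :=
    { toFun := fun u =>
        have h := cons_mem_confinedWalks.1 ((Fin.cons_self_tail u.1).symm ▸ u.2)
        ⟨⟨u.1 0, h.2.1⟩, ⟨Fin.tail u.1, h.2.2⟩⟩
      invFun := fun u => ⟨Fin.cons u.1 u.2, cons_mem_confinedWalks.2 ⟨hx, u.1.2, u.2.2⟩⟩
      left_inv := fun u => by simp
      right_inv := fun u => rfl }
  have (s : S) : Finite (confinedWalks (S : Set (Fin d → ℤ)) (x + s) n) :=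
    finite_confinedWalks S (x + s) n
  rw [walkCountFrom, Nat.card_congr firstStep, Nat.card_sigma]
  exact sum_coe_sort S fun s => walkCountFrom S (x + s) n

end ConfinedWalks

/-! ### The factorization of the model into ballot and Motzkin walks -/

/-- The number of sequences of `n` steps `±1`, exactly `k` of them down, along which a height
starting at `y` stays non-negative. -/
def ballotCount : ℕ → ℕ → ℕ → ℕ
  | 0, _, 0 => 1
  | 0, _, _ + 1 => 0
  | n + 1, 0, k => ballotCount n 1 k
  | n + 1, y + 1, 0 => ballotCount n (y + 2) 0
  | n + 1, y + 1, k + 1 => ballotCount n (y + 2) (k + 1) + ballotCount n y k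

/-- The number of sequences of `k` steps in `{-1, 0, 1}` along which a height starting at `x` stays
non-negative. -/
def motzkinCount : ℕ → ℕ → ℕ
  | 0, _ => 1
  | k + 1, 0 => motzkinCount k 1 + motzkinCount k 0
  | k + 1, x + 1 => motzkinCount k (x + 2) + motzkinCount k (x + 1) + motzkinCount k x

lemma ballotCount_eq_zero_of_lt {n y k : ℕ} (h : n < k) : ballotCount n y k = 0 := by
  induction n, y, k using ballotCount.induct <;> grind [ballotCount]

lemma ballotCount_eq_zero_of_add_lt {n y k : ℕ} (h : n + y < 2 * k) : ballotCount n y k = 0 := by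
  induction n, y, k using ballotCount.induct <;> grind [ballotCount]

/-- The reflection principle: a path with `k` down steps that hits `-1` is reflected at that time
to one with `j` down steps. -/
lemma ballotCount_add_choose {n y k j : ℕ} (hj : k + j = n + y + 1) (hkj : k ≤ j) :
    ballotCount n y k + n.choose j = n.choose k := by
  induction n, y, k using ballotCount.induct generalizing j with
  | case1 y => simp [ballotCount, Nat.choose_eq_zero_of_lt (show 0 < j by lia)]
  | case2 y k => simp [ballotCount, Nat.choose_eq_zero_of_lt (show 0 < j by lia)]
  | case3 n k ih =>
    have ih := ih (by lia) hkj
    obtain ⟨i, rfl⟩ := Nat.exists_eq_succ_of_ne_zero (show j ≠ 0 by lia)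
    cases k with
    | zero => simp_all [ballotCount, Nat.choose_eq_zero_of_lt]
    | succ k =>
      have hsymm : n.choose i = n.choose k := Nat.choose_symm_of_eq_add (by lia)
      rw [ballotCount, Nat.choose_succ_succ', Nat.choose_succ_succ']
      lia
  | case4 n y ih =>
    have hn : n.choose j = 0 := Nat.choose_eq_zero_of_lt (by lia)
    have hn' : (n + 1).choose j = 0 := Nat.choose_eq_zero_of_lt (by lia)
    simpa [ballotCount, hn, hn'] using ih (j := j) (by lia) (by lia)
  | case5 n y k ih₁ ih₂ =>
    obtain ⟨i, rfl⟩ := Nat.exists_eq_succ_of_ne_zero (show j ≠ 0 by lia)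
    have ih₁ := ih₁ (j := i + 1) (by lia) (by lia)
    have ih₂ := ih₂ (j := i) (by lia) (by lia)
    rw [ballotCount, Nat.choose_succ_succ', Nat.choose_succ_succ']
    lia

lemma succ_mul_ballotCount_zero (k d : ℕ) :
    (k + d + 1) * ballotCount (2 * k + d) 0 k = (d + 1) * (2 * k + d).choose k := by
  have hreflect := ballotCount_add_choose (n := 2 * k + d) (y := 0) (k := k) (j := k + d + 1)
    (by lia) (by lia)
  have hchoose : (2 * k + d).choose (k + d + 1) * (k + d + 1) = (2 * k + d).choose k * k := by
    rw [Nat.choose_succ_right_eq, Nat.choose_symm_of_eq_add (show 2 * k + d = (k + d) + k by lia),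
      show 2 * k + d - (k + d) = k by lia]
  nlinarith

/-- The steps N, SE, S, SW, in this order. -/
def modelSteps : Finset (Fin 2 → ℤ) := {![0, 1], ![1, -1], ![0, -1], ![-1, -1]}

lemma sum_modelSteps {M : Type*} [AddCommMonoid M] (f : (Fin 2 → ℤ) → M) :
    ∑ s ∈ modelSteps, f s = f ![0, 1] + (f ![1, -1] + (f ![0, -1] + f ![-1, -1])) := by
  rw [modelSteps, sum_insert (by decide), sum_insert (by decide), sum_insert (by decide),
    sum_singleton]

lemma walkCountFrom_modelSteps_succ (x y n : ℕ) :
    walkCountFrom modelSteps ![(x : ℤ), y] (n + 1) =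
      walkCountFrom modelSteps ![(x : ℤ), y + 1] n +
        (walkCountFrom modelSteps ![(x : ℤ) + 1, y - 1] n +
          (walkCountFrom modelSteps ![(x : ℤ), y - 1] n +
            walkCountFrom modelSteps ![(x : ℤ) - 1, y - 1] n)) := by
  have hxy : 0 ≤ ![(x : ℤ), y] := by simp [Pi.le_def, Fin.forall_fin_two]
  simp [walkCountFrom_succ _ hxy, sum_modelSteps, sub_eq_add_neg]

lemma sum_ballotCount_succ_zero_mul (n : ℕ) (f : ℕ → ℕ) :
    ∑ k ∈ range (n + 2), ballotCount (n + 1) 0 k * f k =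
      ∑ k ∈ range (n + 1), ballotCount n 1 k * f k := by
  simp [sum_range_succ _ (n + 1), ballotCount, ballotCount_eq_zero_of_lt]

lemma sum_ballotCount_succ_succ_mul (n y : ℕ) (f : ℕ → ℕ) :
    ∑ k ∈ range (n + 2), ballotCount (n + 1) (y + 1) k * f k =
      ∑ k ∈ range (n + 1), ballotCount n (y + 2) k * f k +
        ∑ k ∈ range (n + 1), ballotCount n y k * f (k + 1) := by
  have hlast : ∑ k ∈ range (n + 1), ballotCount n (y + 2) k * f k =
      ∑ k ∈ range (n + 2), ballotCount n (y + 2) k * f k := by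
    simp [sum_range_succ _ (n + 1), ballotCount_eq_zero_of_lt]
  rw [hlast, sum_range_succ', sum_range_succ' _ (n + 1)]
  simp only [ballotCount, add_mul, sum_add_distrib]
  ring

/-- The vertical coordinate performs a ballot path, and each of its down steps carries a horizontal
step from `{-1, 0, 1}`. -/
lemma walkCountFrom_modelSteps (n x y : ℕ) :
    walkCountFrom modelSteps ![(x : ℤ), y] n =
      ∑ k ∈ range (n + 1), ballotCount n y k * motzkinCount k x := by
  induction n generalizing x y with
  | zero => simp [walkCountFrom_zero, Pi.le_def, Fin.forall_fin_two, ballotCount, motzkinCount]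
  | succ n ih =>
    have outside {a b : ℤ} (h : a < 0 ∨ b < 0) : walkCountFrom modelSteps ![a, b] n = 0 :=
      walkCountFrom_of_not_nonneg (by simpa [Pi.le_def, Fin.forall_fin_two, imp_iff_not_or]) n
    rw [walkCountFrom_modelSteps_succ, ← Nat.cast_succ, ← Nat.cast_succ, ih]
    cases y with
    | zero =>
      rw [sum_ballotCount_succ_zero_mul]
      simp [outside]
    | succ y =>
      rw [sum_ballotCount_succ_succ_mul, show ((y + 1 : ℕ) : ℤ) - 1 = y by simp, ih, ih]
      cases x with
      | zero => simp [outside, motzkinCount, mul_add, sum_add_distrib]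
      | succ x =>
        rw [show ((x + 1 : ℕ) : ℤ) - 1 = x by simp, ih]
        simp only [motzkinCount, mul_add, sum_add_distrib]
        ring

/-- The summation index is `(k, j)`, where `k` is the number of down steps and `j` the number by
which it falls short of `m`, the largest possible one. -/
lemma walkCount_model_eq_sum_antidiagonal (m p : ℕ) (hp : p ≤ 1) :
    walkCount 2 {![0, 1], ![1, -1], ![0, -1], ![-1, -1]} (2 * m + p) =
      ∑ kj ∈ antidiagonal m, ballotCount (2 * m + p) 0 kj.1 * motzkinCount kj.1 0 := by
  have hsteps : ({![0, 1], ![1, -1], ![0, -1], ![-1, -1]} : Set (Fin 2 → ℤ)) = modelSteps := by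
    simp [modelSteps]
  have horigin : (0 : Fin 2 → ℤ) = ![((0 : ℕ) : ℤ), ((0 : ℕ) : ℤ)] := by
    ext i; fin_cases i <;> rfl
  rw [walkCount_eq_walkCountFrom_zero, hsteps, horigin, walkCountFrom_modelSteps,
    Nat.sum_antidiagonal_eq_sum_range_succ_mk]
  symm
  refine sum_subset (range_subset_range.2 (by lia)) fun k _ hk => ?_
  rw [ballotCount_eq_zero_of_add_lt (by grind), zero_mul]

/-! ### Limits with a rate -/

section LimitsWithRate

open Asymptotics Filter

lemma isBigO_mul_sub_mul {α R : Type*} [NormedRing R] {l : Filter α} {f g : α → R} {a b : R}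
    {u v w : α → ℝ} (hf : (fun x => f x - a) =O[l] u) (hg : (fun x => g x - b) =O[l] v)
    (hu : u =O[l] w) (hv : v =O[l] w) (huv : (fun x => u x * v x) =O[l] w) :
    (fun x => f x * g x - a * b) =O[l] w := by
  have hfb : (fun x => (f x - a) * b) =O[l] w := by
    simpa using (hf.trans hu).mul (isBigO_const_const b (one_ne_zero (α := ℝ)) l)
  refine ((((hf.mul hg).trans huv).add ((hg.trans hv).const_mul_left a)).add hfb).congr_left
    fun x => ?_
  noncomm_ring

lemma isBigO_sub_of_sq_sub_sq {α : Type*} {l : Filter α} {f u : α → ℝ} {a : ℝ}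
    (hf : ∀ x, 0 ≤ f x) (ha : 0 < a) (h : (fun x => f x ^ 2 - a ^ 2) =O[l] u) :
    (fun x => f x - a) =O[l] u := by
  refine (IsBigO.of_bound a⁻¹ (.of_forall fun x => ?_)).trans h
  have hsum : a ≤ |f x + a| := (le_add_of_nonneg_left (hf x)).trans (le_abs_self _)
  rw [sq_sub_sq, Real.norm_eq_abs, Real.norm_eq_abs, abs_mul, inv_mul_eq_div, le_div_iff₀ ha]
  nlinarith [abs_nonneg (f x - a)]

lemma isBigO_top_inv_succ_of_abs_le {f : ℕ → ℝ} {C : ℝ}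
    (h : ∀ n : ℕ, |f n| ≤ C / ((n : ℝ) + 1)) : f =O[⊤] fun n : ℕ => ((n : ℝ) + 1)⁻¹ := by
  refine isBigO_top.2 ⟨C, fun n => (h n).trans_eq ?_⟩
  rw [Real.norm_of_nonneg (by positivity), div_eq_mul_inv]

lemma isBigO_top_inv_succ_mul_sub_mul {f g : ℕ → ℝ} {a b : ℝ}
    (hf : (fun n => f n - a) =O[⊤] fun n : ℕ => ((n : ℝ) + 1)⁻¹)
    (hg : (fun n => g n - b) =O[⊤] fun n : ℕ => ((n : ℝ) + 1)⁻¹) :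
    (fun n => f n * g n - a * b) =O[⊤] fun n : ℕ => ((n : ℝ) + 1)⁻¹ := by
  have hrefl := isBigO_refl (fun n : ℕ => ((n : ℝ) + 1)⁻¹) ⊤
  refine isBigO_mul_sub_mul hf hg hrefl hrefl (isBigO_top.2 ⟨1, fun n => ?_⟩)
  rw [one_mul, norm_mul]
  refine mul_le_of_le_one_left (norm_nonneg _) ?_
  rw [norm_inv, Real.norm_of_nonneg (by positivity)]
  exact inv_le_one_of_one_le₀ (by simp)

/-- The error allowed at `(k, j)` in a limit `k → ∞` whose rate degrades polynomially in `j`. -/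
noncomputable def pairError (d : ℕ) (kj : ℕ × ℕ) : ℝ := ((kj.2 : ℝ) + 1) ^ d / (kj.1 + 1)

lemma norm_pairError (d : ℕ) (kj : ℕ × ℕ) :
    ‖pairError d kj‖ = ((kj.2 : ℝ) + 1) ^ d / (kj.1 + 1) :=
  Real.norm_of_nonneg (by unfold pairError; positivity)

lemma isBigO_pairError_of_abs_le {d : ℕ} {f : ℕ × ℕ → ℝ} {C : ℝ}
    (h : ∀ k j : ℕ, |f (k, j)| ≤ C * ((j : ℝ) + 1) ^ d / ((k : ℝ) + 1)) :
    f =O[⊤] pairError d := by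
  refine isBigO_top.2 ⟨C, fun kj => (h kj.1 kj.2).trans_eq ?_⟩
  rw [norm_pairError, mul_div_assoc]

lemma isBigO_pairError_zero_of_fst {f : ℕ → ℝ} (h : f =O[⊤] fun n : ℕ => ((n : ℝ) + 1)⁻¹) :
    (fun kj : ℕ × ℕ => f kj.1) =O[⊤] pairError 0 :=
  (h.comp_tendsto (k := Prod.fst) tendsto_top).congr_right fun kj => by simp [pairError]

lemma isBigO_pairError_of_le {d e : ℕ} (h : d ≤ e) : pairError d =O[⊤] pairError e := by
  refine isBigO_top.2 ⟨1, fun kj => ?_⟩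
  rw [norm_pairError, norm_pairError, one_mul]
  gcongr
  simp

lemma isBigO_pairError_mul (d e : ℕ) :
    (fun kj => pairError d kj * pairError e kj) =O[⊤] pairError (d + e) := by
  refine isBigO_top.2 ⟨1, fun kj => ?_⟩
  rw [norm_mul, norm_pairError, norm_pairError, norm_pairError, one_mul, div_mul_div_comm,
    ← pow_add]
  gcongr
  nlinarith [kj.1.cast_nonneg (α := ℝ)]

lemma isBigO_pairError_mul_sub_mul {d e : ℕ} {f g : ℕ × ℕ → ℝ} {a b : ℝ}
    (hf : (fun kj => f kj - a) =O[⊤] pairError d) (hg : (fun kj => g kj - b) =O[⊤] pairError e) :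
    (fun kj => f kj * g kj - a * b) =O[⊤] pairError (d + e) :=
  isBigO_mul_sub_mul hf hg (isBigO_pairError_of_le (by lia)) (isBigO_pairError_of_le (by lia))
    (isBigO_pairError_mul d e)

lemma sum_antidiagonal_snd {M : Type*} [AddCommMonoid M] (f : ℕ → M) (m : ℕ) :
    ∑ kj ∈ antidiagonal m, f kj.2 = ∑ j ∈ range (m + 1), f j := by
  rw [← Nat.sum_antidiagonal_swap, Nat.sum_antidiagonal_eq_sum_range_succ_mk]
  rfl

lemma isBigO_sum_antidiagonal_of_pairError {d : ℕ} {q : ℕ → ℝ} {X : ℕ × ℕ → ℝ}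
    (hq : Summable fun j => |q j| * ((j : ℝ) + 1) ^ (d + 1)) (hX : X =O[⊤] pairError d) :
    (fun m => ∑ kj ∈ antidiagonal m, q kj.2 * X kj) =O[⊤] fun m : ℕ => ((m : ℝ) + 1)⁻¹ := by
  obtain ⟨C, hC, hX⟩ := hX.exists_nonneg
  rw [isBigOWith_top] at hX
  refine isBigO_top.2 ⟨C * ∑' j, |q j| * ((j : ℝ) + 1) ^ (d + 1), fun m => ?_⟩
  have hterm : ∀ kj ∈ antidiagonal m,
      ‖q kj.2 * X kj‖ ≤ C * ((m : ℝ) + 1)⁻¹ * (|q kj.2| * ((kj.2 : ℝ) + 1) ^ (d + 1)) := by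
    rintro ⟨k, j⟩ hkj
    have hm : (m : ℝ) = k + j := by exact_mod_cast (mem_antidiagonal.1 hkj).symm
    have hinv : ((k : ℝ) + 1)⁻¹ ≤ ((m : ℝ) + 1)⁻¹ * (j + 1) := by
      rw [hm, inv_mul_eq_div, le_div_iff₀ (by positivity), inv_mul_le_iff₀ (by positivity)]
      nlinarith [k.cast_nonneg (α := ℝ), j.cast_nonneg (α := ℝ)]
    calc ‖q j * X (k, j)‖ ≤ |q j| * (C * (((j : ℝ) + 1) ^ d * ((k : ℝ) + 1)⁻¹)) := by
          rw [norm_mul, Real.norm_eq_abs]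
          gcongr
          exact (hX (k, j)).trans_eq (by rw [norm_pairError, div_eq_mul_inv])
      _ ≤ |q j| * (C * (((j : ℝ) + 1) ^ d * (((m : ℝ) + 1)⁻¹ * (j + 1)))) := by gcongr
      _ = _ := by ring
  calc ‖∑ kj ∈ antidiagonal m, q kj.2 * X kj‖
      ≤ ∑ kj ∈ antidiagonal m, C * ((m : ℝ) + 1)⁻¹ * (|q kj.2| * ((kj.2 : ℝ) + 1) ^ (d + 1)) :=
        norm_sum_le_of_le _ hterm
    _ = C * ((m : ℝ) + 1)⁻¹ * ∑ j ∈ range (m + 1), |q j| * ((j : ℝ) + 1) ^ (d + 1) := by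
        rw [← mul_sum, sum_antidiagonal_snd fun j => |q j| * ((j : ℝ) + 1) ^ (d + 1)]
    _ ≤ C * ((m : ℝ) + 1)⁻¹ * ∑' j, |q j| * ((j : ℝ) + 1) ^ (d + 1) := by
        gcongr
        exact hq.sum_le_tsum _ fun j _ => by positivity
    _ = _ := by
        rw [Real.norm_of_nonneg (by positivity)]
        ring

lemma isBigO_sum_range_succ_sub_tsum {q : ℕ → ℝ} (hq : Summable fun j => |q j| * ((j : ℝ) + 1)) :
    (fun m => ∑ j ∈ range (m + 1), q j - ∑' j, q j) =O[⊤] fun m : ℕ => ((m : ℝ) + 1)⁻¹ := by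
  have hle (j : ℕ) : ‖q j‖ ≤ |q j| * ((j : ℝ) + 1) :=
    le_mul_of_one_le_right (abs_nonneg _) (by simp)
  have hsum : Summable q := .of_norm_bounded hq hle
  refine isBigO_top.2 ⟨∑' j, |q j| * ((j : ℝ) + 1), fun m => ?_⟩
  have htail (j : ℕ) : ‖q (j + (m + 1))‖ ≤
      ((m : ℝ) + 1)⁻¹ * (|q (j + (m + 1))| * (((j + (m + 1) : ℕ) : ℝ) + 1)) := by
    rw [inv_mul_eq_div, le_div_iff₀ (by positivity), Real.norm_eq_abs]
    gcongr
    linarith [j.cast_nonneg (α := ℝ)]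
  have hshift := ((summable_nat_add_iff (m + 1)).2 hq).hasSum.mul_left ((m : ℝ) + 1)⁻¹
  calc ‖∑ j ∈ range (m + 1), q j - ∑' j, q j‖ = ‖∑' j, q (j + (m + 1))‖ := by
        rw [← hsum.sum_add_tsum_nat_add (m + 1), sub_add_cancel_left, norm_neg]
    _ ≤ ((m : ℝ) + 1)⁻¹ * ∑' j, |q (j + (m + 1))| * (((j + (m + 1) : ℕ) : ℝ) + 1) :=
        tsum_of_norm_bounded hshift htail
    _ ≤ ((m : ℝ) + 1)⁻¹ * ∑' j, |q j| * ((j : ℝ) + 1) := by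
        refine mul_le_mul_of_nonneg_left ?_ (by positivity)
        exact tsum_comp_le_tsum_of_inj hq (fun j => by positivity) (add_left_injective (m + 1))
    _ = _ := by rw [Real.norm_of_nonneg (by positivity), mul_comm]

lemma isBigO_sum_antidiagonal_sub_mul_tsum {d : ℕ} {q : ℕ → ℝ} {X : ℕ × ℕ → ℝ} {a : ℝ}
    (hq : Summable fun j => |q j| * ((j : ℝ) + 1) ^ (d + 1))
    (hX : (fun kj => X kj - a) =O[⊤] pairError d) :
    (fun m => ∑ kj ∈ antidiagonal m, q kj.2 * X kj - a * ∑' j, q j) =O[⊤]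
      fun m : ℕ => ((m : ℝ) + 1)⁻¹ := by
  have hq1 : Summable fun j => |q j| * ((j : ℝ) + 1) := by
    refine hq.of_nonneg_of_le (fun j => by positivity) fun j => ?_
    gcongr
    exact le_self_pow₀ (by simp) (by simp)
  refine ((isBigO_sum_antidiagonal_of_pairError hq hX).add
    ((isBigO_sum_range_succ_sub_tsum hq1).const_mul_left a)).congr_left fun m => ?_
  simp only [mul_sub, sum_sub_distrib, ← sum_mul, sum_antidiagonal_snd]
  ring

end LimitsWithRate

/-! ### Central binomial coefficients and Wallis' product -/

section Wallis

open Real Asymptotics Filter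

lemma isBigO_wallis_sub : (fun k => Wallis.W k - π / 2) =O[⊤] fun k : ℕ => ((k : ℝ) + 1)⁻¹ := by
  refine isBigO_top_inv_succ_of_abs_le (C := π / 4) fun k => ?_
  have hlower : π / 2 - π / 4 / ((k : ℝ) + 1) ≤ Wallis.W k := by
    refine (le_of_eq ?_).trans (Wallis.le_W k)
    field_simp
    ring
  rw [abs_sub_comm, abs_of_nonneg (sub_nonneg.2 (Wallis.W_le k))]
  linarith

lemma isBigO_inv_wallis_sub :
    (fun k => (Wallis.W k)⁻¹ - 2 / π) =O[⊤] fun k : ℕ => ((k : ℝ) + 1)⁻¹ := by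
  refine isBigO_top_inv_succ_of_abs_le (C := 2 / π) fun k => ?_
  have hlower : 2 / π ≤ (Wallis.W k)⁻¹ := by
    simpa using inv_anti₀ (Wallis.W_pos k) (Wallis.W_le k)
  have hupper : (Wallis.W k)⁻¹ ≤ 2 / π + 2 / π / (2 * k + 1) := by
    refine (inv_anti₀ (by positivity) (Wallis.le_W k)).trans_eq ?_
    field_simp
    ring
  have hweaken : 2 / π / (2 * (k : ℝ) + 1) ≤ 2 / π / ((k : ℝ) + 1) := by
    gcongr
    linarith [k.cast_nonneg (α := ℝ)]
  rw [abs_of_nonneg (sub_nonneg.2 hlower)]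
  linarith

lemma isBigO_succ_div_two_mul_succ_sub :
    (fun k : ℕ => ((k : ℝ) + 1) / (2 * k + 1) - 1 / 2) =O[⊤] fun k : ℕ => ((k : ℝ) + 1)⁻¹ := by
  refine isBigO_top_inv_succ_of_abs_le (C := 1) fun k => ?_
  have hdiff : ((k : ℝ) + 1) / (2 * k + 1) - 1 / 2 = 1 / (2 * (2 * k + 1)) := by
    field_simp
    ring
  rw [hdiff, abs_of_pos (by positivity)]
  gcongr
  linarith [k.cast_nonneg (α := ℝ)]

lemma sq_centralBinom_div_four_pow (k : ℕ) :
    ((k.centralBinom : ℝ) / 4 ^ k) ^ 2 = (Wallis.W k)⁻¹ / (2 * k + 1) := by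
  induction k with
  | zero => simp [Wallis.W]
  | succ k ih =>
    have hrec : ((k + 1).centralBinom : ℝ) / 4 ^ (k + 1) =
        (2 * k + 1) / (2 * (k + 1)) * (k.centralBinom / 4 ^ k) := by
      have h : ((k : ℝ) + 1) * (k + 1).centralBinom = 2 * (2 * k + 1) * k.centralBinom := by
        exact_mod_cast Nat.succ_mul_centralBinom_succ k
      field_simp
      linear_combination 2 * 4 ^ k * h
    have hW := (Wallis.W_pos k).ne'
    rw [hrec, mul_pow, ih, Wallis.W_succ]
    push_cast
    field_simp
    ring

lemma isBigO_centralBinom_sub :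
    (fun k : ℕ => (k.centralBinom : ℝ) / 4 ^ k * √(k + 1) - 1 / √π) =O[⊤]
      fun k : ℕ => ((k : ℝ) + 1)⁻¹ := by
  refine isBigO_sub_of_sq_sub_sq (fun k => by positivity) (by positivity) ?_
  refine (isBigO_top_inv_succ_mul_sub_mul isBigO_succ_div_two_mul_succ_sub
    isBigO_inv_wallis_sub).congr_left fun k => ?_
  rw [mul_pow, sq_centralBinom_div_four_pow, sq_sqrt (by positivity), div_pow, sq_sqrt pi_nonneg]
  ring

lemma isBigO_choose_two_mul_add_sub (p : ℕ) :
    (fun m : ℕ => ((2 * m + p).choose m : ℝ) / 2 ^ (2 * m + p) * √(m + 1) - 1 / √π) =O[⊤]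
      fun m : ℕ => ((m : ℝ) + 1)⁻¹ := by
  induction p with
  | zero => simpa [pow_mul, Nat.centralBinom, show (2 : ℝ) ^ 2 = 4 by norm_num]
      using isBigO_centralBinom_sub
  | succ p ih =>
    have hratio : (fun m : ℕ => (2 * (m : ℝ) + p + 1) / (2 * (m + p + 1)) - 1) =O[⊤]
        fun m : ℕ => ((m : ℝ) + 1)⁻¹ := by
      refine isBigO_top_inv_succ_of_abs_le (C := p + 1) fun m => ?_
      have hdiff : (2 * (m : ℝ) + p + 1) / (2 * (m + p + 1)) - 1 =
          -((p + 1) / (2 * (m + p + 1))) := by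
        field_simp
        ring
      rw [hdiff, abs_neg, abs_of_pos (by positivity)]
      gcongr
      linarith [m.cast_nonneg (α := ℝ), p.cast_nonneg (α := ℝ)]
    refine (isBigO_top_inv_succ_mul_sub_mul hratio ih).congr_left fun m => ?_
    have hchoose : ((2 * m + p).choose m : ℝ) * (2 * m + p + 1) =
        (2 * m + (p + 1)).choose m * (m + p + 1) := by
      have h := Nat.choose_mul_succ_eq (2 * m + p) m
      rw [show 2 * m + p + 1 - m = m + p + 1 by lia] at h
      exact_mod_cast h
    rw [← add_assoc] at hchoose ⊢
    rw [one_mul, pow_succ]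
    field_simp
    linear_combination √((m : ℝ) + 1) * √π * hchoose

/-- `∫₀¹ (1 - v²)ᵏ dv`, one of the integrals behind Wallis' product. -/
noncomputable def integralOneSubSqPow (k : ℕ) : ℝ := ∫ v in (0 : ℝ)..1, (1 - v ^ 2) ^ k

lemma integralOneSubSqPow_succ (k : ℕ) :
    integralOneSubSqPow (k + 1) = integralOneSubSqPow k * ((2 * k + 2) / (2 * k + 3)) := by
  have hcos (k : ℕ) : integralOneSubSqPow k = ∫ x in (0 : ℝ)..(π / 2), cos x ^ (2 * k + 1) := by
    simpa [integralOneSubSqPow] using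
      (integral_sin_pow_mul_cos_pow_odd (a := 0) (b := π / 2) 0 k).symm
  rw [hcos, hcos, show 2 * (k + 1) + 1 = (2 * k + 1) + 2 by ring, integral_cos_pow]
  simp only [cos_pi_div_two, sin_zero, ne_eq, Nat.succ_ne_zero, not_false_eq_true, zero_pow,
    zero_mul, mul_zero, sub_self, zero_div, zero_add]
  push_cast
  ring

lemma integralOneSubSqPow_pos (k : ℕ) : 0 < integralOneSubSqPow k := by
  induction k with
  | zero => simp [integralOneSubSqPow]
  | succ k ih =>
    rw [integralOneSubSqPow_succ]
    positivity

lemma sq_integralOneSubSqPow (k : ℕ) : integralOneSubSqPow k ^ 2 = Wallis.W k / (2 * k + 1) := by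
  induction k with
  | zero => simp [integralOneSubSqPow, Wallis.W]
  | succ k ih =>
    rw [integralOneSubSqPow_succ, mul_pow, ih, Wallis.W_succ]
    push_cast
    field_simp
    ring

lemma isBigO_integralOneSubSqPow_sub :
    (fun k : ℕ => integralOneSubSqPow k * √(k + 1) - √π / 2) =O[⊤]
      fun k : ℕ => ((k : ℝ) + 1)⁻¹ := by
  refine isBigO_sub_of_sq_sub_sq
    (fun k => mul_nonneg (integralOneSubSqPow_pos k).le (sqrt_nonneg _)) (by positivity) ?_
  refine (isBigO_top_inv_succ_mul_sub_mul isBigO_succ_div_two_mul_succ_sub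
    isBigO_wallis_sub).congr_left fun k => ?_
  rw [mul_pow, sq_integralOneSubSqPow, sq_sqrt (by positivity), div_pow, sq_sqrt pi_nonneg]
  ring

end Wallis

/-! ### Motzkin walks -/

section Motzkin

open MeasureTheory Polynomial Polynomial.Chebyshev

lemma integral_eval_add_measureT (f g : ℝ[X]) :
    ∫ t, (f + g).eval t ∂measureT = ∫ t, f.eval t ∂measureT + ∫ t, g.eval t ∂measureT := by
  simp only [eval_add]
  exact integral_add (integrable_measureT f.continuous.continuousOn)
    (integrable_measureT g.continuous.continuousOn)

lemma one_add_X_mul_U_succ {R : Type*} [CommRing R] (n : ℤ) :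
    (1 + X) * U R (n + 1) = (1 + X) * U R n + T R (n + 1) + T R (n + 2) := by
  linear_combination U_eq_X_mul_U_add_T R n - T_eq_X_mul_U_sub_U R n

lemma integral_one_add_X_mul_U (n : ℕ) :
    ∫ t, ((1 + X) * U ℝ n).eval t ∂measureT = Real.pi := by
  induction n with
  | zero =>
    have h : (1 + X) * U ℝ (0 : ℕ) = T ℝ 0 + T ℝ 1 := by simp
    rw [h, integral_eval_add_measureT, integral_eval_T_real_measureT_zero,
      integral_eval_T_real_measureT_of_ne_zero one_ne_zero, add_zero]
  | succ n ih =>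
    rw [Nat.cast_succ, one_add_X_mul_U_succ, integral_eval_add_measureT, integral_eval_add_measureT,
      ih, integral_eval_T_real_measureT_of_ne_zero (by lia),
      integral_eval_T_real_measureT_of_ne_zero (by lia), add_zero, add_zero]

lemma one_add_two_X_mul_U {R : Type*} [CommRing R] (n : ℤ) :
    (1 + 2 * X) * U R n = U R (n + 1) + U R n + U R (n - 1) := by
  linear_combination -U_add_one R n

/-- The transfer operator of Motzkin walks acts on `x ↦ (U x).eval t` as multiplication by
`1 + 2 * t`. -/
lemma motzkinCount_mul_pi (k x : ℕ) :
    motzkinCount k x * Real.pi =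
      ∫ t, ((1 + 2 * X) ^ k * ((1 + X) * U ℝ x)).eval t ∂measureT := by
  induction k generalizing x with
  | zero => simp only [motzkinCount, Nat.cast_one, one_mul, pow_zero, integral_one_add_X_mul_U]
  | succ k ih =>
    have hstep : (1 + 2 * X) ^ (k + 1) * ((1 + X) * U ℝ x) =
        (1 + 2 * X) ^ k * ((1 + X) * U ℝ (x + 1 : ℕ)) + (1 + 2 * X) ^ k * ((1 + X) * U ℝ x) +
          (1 + 2 * X) ^ k * ((1 + X) * U ℝ (x - 1 : ℤ)) := by
      push_cast
      linear_combination (1 + 2 * X) ^ k * (1 + X) * one_add_two_X_mul_U (R := ℝ) x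
    rw [hstep, integral_eval_add_measureT, integral_eval_add_measureT, ← ih, ← ih]
    cases x with
    | zero => simp [motzkinCount, add_mul]
    | succ x =>
      rw [show ((x + 1 : ℕ) : ℤ) - 1 = (x : ℕ) by simp, ← ih]
      simp [motzkinCount, add_mul]

lemma motzkinCount_zero_right_mul_pi (k : ℕ) :
    motzkinCount k 0 * Real.pi = 4 * ∫ s in (0 : ℝ)..1, (3 - 4 * s ^ 2) ^ k * √(1 - s ^ 2) := by
  have hsubst := intervalIntegral.integral_comp_mul_deriv (a := 0) (b := Real.pi)
    (f := fun θ => Real.sin (θ / 2)) (f' := fun θ => Real.cos (θ / 2) * (1 / 2))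
    (g := fun s => (3 - 4 * s ^ 2) ^ k * √(1 - s ^ 2))
    (fun θ _ => (Real.hasDerivAt_sin _).comp θ ((hasDerivAt_id θ).div_const 2)) (by fun_prop)
    (by fun_prop)
  simp only [zero_div, Real.sin_zero, Real.sin_pi_div_two] at hsubst
  rw [motzkinCount_mul_pi, integral_measureT_eq_integral_cos, ← hsubst,
    ← intervalIntegral.integral_const_mul]
  refine intervalIntegral.integral_congr fun θ hθ => ?_
  rw [Set.uIcc_of_le Real.pi_pos.le] at hθ
  have hnonneg : 0 ≤ Real.cos (θ / 2) :=
    Real.cos_nonneg_of_mem_Icc ⟨by linarith [hθ.1, Real.pi_pos], by linarith [hθ.2]⟩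
  have hsqrt : √(1 - Real.sin (θ / 2) ^ 2) = Real.cos (θ / 2) := by
    rw [← Real.cos_sq', Real.sqrt_sq hnonneg]
  have hhalf : Real.cos θ = 2 * Real.cos (θ / 2) ^ 2 - 1 := by
    rw [← Real.cos_two_mul, mul_div_cancel₀ θ two_ne_zero]
  simp only [Nat.cast_zero, U_zero, mul_one, eval_mul, eval_pow, eval_add, eval_one, eval_ofNat,
    eval_X, Function.comp_apply, hsqrt]
  rw [Real.sin_sq, hhalf]
  ring

end Motzkin

section MotzkinAsymptotics

open intervalIntegral Real Asymptotics

lemma abs_integral_sqrt_three_div_two_one_le (k : ℕ) :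
    |∫ s in (√3 / 2)..1, (3 - 4 * s ^ 2) ^ k * √(1 - s ^ 2)| ≤ 1 := by
  have hsq : √3 ^ 2 = 3 := sq_sqrt (by norm_num)
  have hlt : √3 < 2 := by nlinarith
  have hle (s : ℝ) (hs : s ∈ Set.uIoc (√3 / 2) 1) : ‖(3 - 4 * s ^ 2) ^ k * √(1 - s ^ 2)‖ ≤ 1 := by
    rw [Set.uIoc_of_le (by linarith)] at hs
    have hbase : ‖3 - 4 * s ^ 2‖ ≤ 1 := by
      rw [norm_eq_abs, abs_le]
      constructor <;> nlinarith [hs.1, hs.2, sqrt_nonneg 3]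
    have hsqrt : ‖√(1 - s ^ 2)‖ ≤ 1 := by
      rw [norm_of_nonneg (sqrt_nonneg _), sqrt_le_one]
      nlinarith
    rw [norm_mul, norm_pow]
    exact mul_le_one₀ (pow_le_one₀ (norm_nonneg _) hbase) (norm_nonneg _) hsqrt
  refine (norm_integral_le_of_norm_le_const hle).trans ?_
  rw [one_mul, abs_of_pos (by linarith)]
  linarith [sqrt_nonneg 3]

lemma integral_zero_sqrt_three_div_two (k : ℕ) :
    ∫ s in (0 : ℝ)..(√3 / 2), (3 - 4 * s ^ 2) ^ k * √(1 - s ^ 2) =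
      √3 / 2 * 3 ^ k * ∫ v in (0 : ℝ)..1, (1 - v ^ 2) ^ k * √(1 - 3 / 4 * v ^ 2) := by
  have hscale := smul_integral_comp_mul_left (a := 0) (b := 1)
    (fun s : ℝ => (3 - 4 * s ^ 2) ^ k * √(1 - s ^ 2)) (√3 / 2)
  rw [mul_zero, mul_one, smul_eq_mul] at hscale
  rw [← hscale, mul_assoc, ← integral_const_mul (3 ^ k)]
  refine congrArg (√3 / 2 * ·) (integral_congr fun v _ => ?_)
  have hsq : (√3 / 2 * v) ^ 2 = 3 / 4 * v ^ 2 := by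
    rw [mul_pow, div_pow, sq_sqrt (by norm_num)]
    norm_num
  simp only [hsq, ← mul_assoc, ← mul_pow]
  ring_nf

lemma integral_one_sub_sq_pow_mul_sqrt_mem_Icc (k : ℕ) :
    ∫ v in (0 : ℝ)..1, (1 - v ^ 2) ^ k * √(1 - 3 / 4 * v ^ 2) ∈
      Set.Icc (integralOneSubSqPow (k + 1)) (integralOneSubSqPow k) := by
  have hint {f : ℝ → ℝ} (hf : Continuous f) : IntervalIntegrable f MeasureTheory.volume 0 1 :=
    hf.intervalIntegrable 0 1
  have hpow (v : ℝ) (hv : v ∈ Set.Icc (0 : ℝ) 1) : 0 ≤ (1 - v ^ 2) ^ k :=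
    pow_nonneg (by nlinarith [hv.1, hv.2]) k
  constructor <;> refine integral_mono_on zero_le_one (hint (by fun_prop)) (hint (by fun_prop))
    fun v hv => ?_
  · rw [pow_succ]
    refine mul_le_mul_of_nonneg_left (le_sqrt_of_sq_le ?_) (hpow v hv)
    nlinarith [pow_le_one₀ hv.1 hv.2 (n := 2), sq_nonneg v]
  · exact mul_le_of_le_one_right (hpow v hv) (sqrt_le_one.2 (by nlinarith))

lemma isBigO_integral_one_sub_sq_pow_mul_sqrt_sub :
    (fun k : ℕ => (∫ v in (0 : ℝ)..1, (1 - v ^ 2) ^ k * √(1 - 3 / 4 * v ^ 2)) * √(k + 1) - √π / 2)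
      =O[⊤] fun k : ℕ => ((k : ℝ) + 1)⁻¹ := by
  set J : ℕ → ℝ := fun k => ∫ v in (0 : ℝ)..1, (1 - v ^ 2) ^ k * √(1 - 3 / 4 * v ^ 2)
  have hratio : (fun k => J k / integralOneSubSqPow k - 1) =O[⊤] fun k : ℕ => ((k : ℝ) + 1)⁻¹ := by
    refine isBigO_top_inv_succ_of_abs_le (C := 1) fun k => ?_
    have hpos := integralOneSubSqPow_pos k
    obtain ⟨hlower, hupper⟩ := integral_one_sub_sq_pow_mul_sqrt_mem_Icc k
    rw [integralOneSubSqPow_succ, ← le_div_iff₀' hpos] at hlower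
    rw [← div_le_one hpos] at hupper
    have hgap : 1 - 1 / ((k : ℝ) + 1) ≤ (2 * k + 2) / (2 * k + 3) := by
      rw [one_sub_div (by positivity), div_le_div_iff₀ (by positivity) (by positivity)]
      nlinarith [k.cast_nonneg (α := ℝ)]
    rw [abs_sub_comm, abs_of_nonneg (sub_nonneg.2 hupper)]
    linarith
  refine (isBigO_top_inv_succ_mul_sub_mul hratio isBigO_integralOneSubSqPow_sub).congr_left
    fun k => ?_
  rw [one_mul, ← mul_assoc, div_mul_cancel₀ _ (integralOneSubSqPow_pos k).ne']

lemma isBigO_sqrt_succ_div_three_pow :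
    (fun k : ℕ => √(k + 1) / 3 ^ k) =O[⊤] fun k : ℕ => ((k : ℝ) + 1)⁻¹ := by
  have hsq (k : ℕ) : ((k : ℝ) + 1) ^ 2 ≤ 4 * 3 ^ k := by
    induction k with
    | zero => norm_num
    | succ k ih =>
      have hbernoulli := one_add_mul_le_pow (show (-2 : ℝ) ≤ 2 by norm_num) k
      calc ((k + 1 : ℕ) + 1 : ℝ) ^ 2 = (k + 1) ^ 2 + (1 + k * 2) + 2 := by push_cast; ring
        _ ≤ 4 * 3 ^ k + 3 ^ k + 2 * 3 ^ k := by
          gcongr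
          · simpa [show (1 : ℝ) + 2 = 3 by norm_num] using hbernoulli
          · linarith [one_le_pow₀ (show (1 : ℝ) ≤ 3 by norm_num) (n := k)]
        _ ≤ 4 * 3 ^ (k + 1) := by rw [pow_succ]; linarith [pow_pos (show (0 : ℝ) < 3 by norm_num) k]
  refine isBigO_top_inv_succ_of_abs_le (C := 4) fun k => ?_
  have hsqrt : √((k : ℝ) + 1) ≤ k + 1 := sqrt_le_iff.2 ⟨by positivity, by nlinarith⟩
  rw [abs_of_nonneg (by positivity), div_le_div_iff₀ (by positivity) (by positivity)]
  nlinarith [hsq k]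

lemma isBigO_motzkinCount_zero_sub :
    (fun k : ℕ => (motzkinCount k 0 : ℝ) / 3 ^ k * √(k + 1) - √3 / √π) =O[⊤]
      fun k : ℕ => ((k : ℝ) + 1)⁻¹ := by
  set tail : ℕ → ℝ := fun k => ∫ s in (√3 / 2)..1, (3 - 4 * s ^ 2) ^ k * √(1 - s ^ 2)
  have htail : (fun k => tail k * (√(k + 1) / 3 ^ k)) =O[⊤] fun k : ℕ => ((k : ℝ) + 1)⁻¹ := by
    simpa using (isBigO_top.2 ⟨1, fun k => by
      simpa using abs_integral_sqrt_three_div_two_one_le k⟩ :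
        tail =O[⊤] fun _ => (1 : ℝ)).mul isBigO_sqrt_succ_div_three_pow
  refine ((isBigO_integral_one_sub_sq_pow_mul_sqrt_sub.const_mul_left (2 * √3 / π)).add
    (htail.const_mul_left (4 / π))).congr_left fun k => ?_
  have hint (a b : ℝ) : IntervalIntegrable (fun s => (3 - 4 * s ^ 2) ^ k * √(1 - s ^ 2))
      MeasureTheory.volume a b := Continuous.intervalIntegrable (by fun_prop) a b
  have hcount := motzkinCount_zero_right_mul_pi k
  rw [← integral_add_adjacent_intervals (hint 0 (√3 / 2)) (hint (√3 / 2) 1),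
    integral_zero_sqrt_three_div_two] at hcount
  rw [eq_div_of_mul_eq pi_ne_zero hcount, show √3 / √π = √3 * √π / π by
    rw [mul_div_assoc, sqrt_div_self', mul_one_div]]
  generalize (∫ v in (0 : ℝ)..1, (1 - v ^ 2) ^ k * √(1 - 3 / 4 * v ^ 2)) = body
  simp only [tail]
  generalize (∫ s in (√3 / 2)..1, (3 - 4 * s ^ 2) ^ k * √(1 - s ^ 2)) = rest
  field_simp
  ring

end MotzkinAsymptotics

/-! ### Asymptotics of the summands -/

section Summands

open Real Asymptotics

lemma isBigO_add_succ_div_sub (p : ℕ) :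
    (fun kj : ℕ × ℕ => ((kj.1 : ℝ) + kj.2 + 1) / (kj.1 + 2 * kj.2 + p + 1) - 1) =O[⊤]
      pairError 1 := by
  refine isBigO_pairError_of_abs_le (C := p + 1) fun k j => ?_
  have hdiff : ((k : ℝ) + j + 1) / (k + 2 * j + p + 1) - 1 = -((j + p) / (k + 2 * j + p + 1)) := by
    field_simp
    ring
  rw [hdiff, abs_neg, abs_of_nonneg (by positivity)]
  refine div_le_div₀ (by positivity) ?_ (by positivity) ?_
  · nlinarith [mul_nonneg (p.cast_nonneg (α := ℝ)) (j.cast_nonneg (α := ℝ))]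
  · linarith [p.cast_nonneg (α := ℝ), j.cast_nonneg (α := ℝ)]

lemma isBigO_sqrt_add_succ_div_succ_sub :
    (fun kj : ℕ × ℕ => √(((kj.1 : ℝ) + kj.2 + 1) / (kj.1 + 1)) - 1) =O[⊤] pairError 1 := by
  refine isBigO_sub_of_sq_sub_sq (fun kj => sqrt_nonneg _) one_pos ?_
  refine isBigO_pairError_of_abs_le (C := 1) fun k j => ?_
  have hdiff : √(((k : ℝ) + j + 1) / (k + 1)) ^ 2 - 1 ^ 2 = j / (k + 1) := by
    rw [sq_sqrt (by positivity)]
    field_simp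
    ring
  rw [hdiff, abs_of_nonneg (by positivity), one_mul, pow_one]
  gcongr
  simp

lemma choose_le_choose_of_le_half {n r s : ℕ} (hrs : r ≤ s) (hs : s ≤ n / 2) :
    n.choose r ≤ n.choose s := by
  induction s, hrs using Nat.le_induction with
  | base => rfl
  | succ s _ ih => exact (ih (by lia)).trans (Nat.choose_le_succ_of_lt_half_left hs)

lemma choose_add_mul_succ_pow_le (n k j : ℕ) :
    n.choose (k + j) * (k + 1) ^ j ≤ n.choose k * (n - k) ^ j := by
  induction j with
  | zero => simp
  | succ j ih =>
    calc n.choose (k + (j + 1)) * (k + 1) ^ (j + 1)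
        ≤ n.choose (k + j + 1) * (k + j + 1) * (k + 1) ^ j := by
          rw [pow_succ', ← mul_assoc, ← add_assoc]
          gcongr
          lia
      _ = n.choose (k + j) * (k + 1) ^ j * (n - (k + j)) := by
          rw [Nat.choose_succ_right_eq, mul_right_comm]
      _ ≤ n.choose k * (n - k) ^ j * (n - k) := by gcongr; lia
      _ = n.choose k * (n - k) ^ (j + 1) := by rw [pow_succ, mul_assoc]

lemma one_sub_le_choose_div_choose (p k j : ℕ) :
    1 - j * ((2 * j + p) / ((k : ℝ) + 2 * j + p + 1)) ≤
      ((2 * (k + j) + p).choose k : ℝ) / (2 * (k + j) + p).choose (k + j) := by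
  have hpos : (0 : ℝ) < (2 * (k + j) + p).choose (k + j) := by
    exact_mod_cast Nat.choose_pos (by lia)
  have hfrac : ((k : ℝ) + 1) / (k + 2 * j + p + 1) = 1 + -((2 * j + p) / (k + 2 * j + p + 1)) := by
    field_simp
    ring
  have hle : (2 * (j : ℝ) + p) / (k + 2 * j + p + 1) ≤ 1 :=
    (div_le_one (by positivity)).2 (by linarith [k.cast_nonneg (α := ℝ)])
  calc 1 - j * ((2 * j + p) / ((k : ℝ) + 2 * j + p + 1))
      = 1 + j * -((2 * j + p) / ((k : ℝ) + 2 * j + p + 1)) := by ring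
    _ ≤ (((k : ℝ) + 1) / (k + 2 * j + p + 1)) ^ j := by
        rw [hfrac]
        exact one_add_mul_le_pow (by linarith) j
    _ ≤ ((2 * (k + j) + p).choose k : ℝ) / (2 * (k + j) + p).choose (k + j) := by
        rw [div_pow, div_le_div_iff₀ (by positivity) hpos, mul_comm]
        have h : (2 * (k + j) + p).choose (k + j) * (k + 1) ^ j ≤
            (2 * (k + j) + p).choose k * (k + 2 * j + p + 1) ^ j :=
          (choose_add_mul_succ_pow_le _ k j).trans (by gcongr; lia)
        exact_mod_cast h

lemma isBigO_choose_div_choose_sub (p : ℕ) :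
    (fun kj : ℕ × ℕ => ((2 * (kj.1 + kj.2) + p).choose kj.1 : ℝ) /
      (2 * (kj.1 + kj.2) + p).choose (kj.1 + kj.2) - 1) =O[⊤] pairError 2 := by
  refine isBigO_pairError_of_abs_le (C := p + 2) fun k j => ?_
  have hupper : ((2 * (k + j) + p).choose k : ℝ) / (2 * (k + j) + p).choose (k + j) ≤ 1 := by
    refine div_le_one_of_le₀ ?_ (Nat.cast_nonneg _)
    exact_mod_cast choose_le_choose_of_le_half (by lia) (by lia)
  have hgap : j * ((2 * j + p) / ((k : ℝ) + 2 * j + p + 1)) ≤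
      (p + 2) * ((j : ℝ) + 1) ^ 2 / (k + 1) := by
    have hj := j.cast_nonneg (α := ℝ)
    have hp := p.cast_nonneg (α := ℝ)
    rw [← mul_div_assoc]
    refine div_le_div₀ (by positivity) ?_ (by positivity) (by linarith)
    nlinarith [mul_nonneg hp hj, mul_nonneg hp (sq_nonneg (j : ℝ))]
  rw [abs_sub_comm, abs_of_nonneg (sub_nonneg.2 hupper)]
  linarith [one_sub_le_choose_div_choose p k j]

/-- The part that converges as `k → ∞` of the summand at `(k, j)` in
`walkCount_model_eq_sum_antidiagonal`. Once that summand is scaled by `n² / (2ⁿ 3ᵐ)`, where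
`m = k + j` and `n = 2 m + p`, its other factors are `shortfallWeight p j` and `totalFactor p m`. -/
noncomputable def convergentFactor (p : ℕ) (kj : ℕ × ℕ) : ℝ :=
  ((kj.1 : ℝ) + kj.2 + 1) / (kj.1 + 2 * kj.2 + p + 1) * √(((kj.1 : ℝ) + kj.2 + 1) / (kj.1 + 1)) *
    (((2 * (kj.1 + kj.2) + p).choose kj.1 : ℝ) / (2 * (kj.1 + kj.2) + p).choose (kj.1 + kj.2)) *
    (motzkinCount kj.1 0 / 3 ^ kj.1 * √(kj.1 + 1))

lemma isBigO_convergentFactor_sub (p : ℕ) :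
    (fun kj => convergentFactor p kj - √3 / √π) =O[⊤] pairError 4 := by
  simpa only [one_mul, convergentFactor] using
    isBigO_pairError_mul_sub_mul (isBigO_pairError_mul_sub_mul (isBigO_pairError_mul_sub_mul
      (isBigO_add_succ_div_sub p) isBigO_sqrt_add_succ_div_succ_sub)
      (isBigO_choose_div_choose_sub p)) (isBigO_pairError_zero_of_fst isBigO_motzkinCount_zero_sub)

/-- The factor of the scaled summand at `(k, j)` that depends only on the shortfall `j`. -/
noncomputable def shortfallWeight (p j : ℕ) : ℝ := (2 * j + p + 1) * (1 / 3) ^ j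

lemma summable_abs_shortfallWeight_mul_pow (p d : ℕ) :
    Summable fun j => |shortfallWeight p j| * ((j : ℝ) + 1) ^ d := by
  have hgeom := summable_pow_mul_geometric_of_norm_lt_one (R := ℝ) (d + 1)
    (r := 1 / 3) (by norm_num)
  refine (((summable_nat_add_iff 1).2 hgeom).mul_left (3 * (p + 2) : ℝ)).of_nonneg_of_le
    (fun j => by positivity) fun j => ?_
  rw [shortfallWeight, abs_of_nonneg (by positivity)]
  calc (2 * (j : ℝ) + p + 1) * (1 / 3) ^ j * (j + 1) ^ d
      ≤ (p + 2) * (j + 1) * (1 / 3) ^ j * (j + 1) ^ d := by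
        gcongr
        nlinarith [mul_nonneg (j.cast_nonneg (α := ℝ)) (p.cast_nonneg (α := ℝ))]
    _ = 3 * (p + 2) * (((j + 1 : ℕ) : ℝ) ^ (d + 1) * (1 / 3) ^ (j + 1)) := by
        push_cast
        ring

lemma tsum_shortfallWeight (p : ℕ) : ∑' j, shortfallWeight p j = 3 * (p + 2) / 2 := by
  have hgeom := (hasSum_geometric_of_lt_one (r := 1 / 3) (by norm_num) (by norm_num)).mul_left
    (p + 1 : ℝ)
  have hlinear := (hasSum_coe_mul_geometric_of_norm_lt_one (𝕜 := ℝ) (r := 1 / 3)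
    (by norm_num)).mul_left 2
  refine (((hlinear.add hgeom).congr_fun fun j => ?_).tsum_eq).trans ?_
  · rw [shortfallWeight]
    ring
  · ring

end Summands

/-! ### Asymptotics of the walks -/

section Walks

open Real Asymptotics

/-- The factor of the scaled summand at `(k, j)` that depends only on the total `m = k + j`. -/
noncomputable def totalFactor (p m : ℕ) : ℝ :=
  (((2 * m + p : ℕ) : ℝ) / (m + 1)) ^ 2 *
    (((2 * m + p).choose m : ℝ) / 2 ^ (2 * m + p) * √(m + 1))

lemma isBigO_totalFactor_sub (p : ℕ) :
    (fun m => totalFactor p m - 4 / √π) =O[⊤] fun m : ℕ => ((m : ℝ) + 1)⁻¹ := by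
  have hratio : (fun m : ℕ => ((2 * m + p : ℕ) : ℝ) / (m + 1) - 2) =O[⊤]
      fun m : ℕ => ((m : ℝ) + 1)⁻¹ := by
    refine isBigO_top_inv_succ_of_abs_le (C := |(p : ℝ) - 2|) fun m => le_of_eq ?_
    rw [← abs_of_pos (show (0 : ℝ) < m + 1 by positivity), ← abs_div,
      abs_of_pos (show (0 : ℝ) < m + 1 by positivity)]
    congr 1
    push_cast
    field_simp
    ring
  refine (isBigO_top_inv_succ_mul_sub_mul (isBigO_top_inv_succ_mul_sub_mul hratio hratio)
    (isBigO_choose_two_mul_add_sub p)).congr_left fun m => ?_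
  rw [totalFactor]
  ring

lemma ballotCount_mul_motzkinCount_eq (p k j : ℕ) :
    ((ballotCount (2 * (k + j) + p) 0 k * motzkinCount k 0 : ℕ) : ℝ) /
        (2 ^ (2 * (k + j) + p) * 3 ^ (k + j)) * ((2 * (k + j) + p : ℕ) : ℝ) ^ 2 =
      totalFactor p (k + j) * (shortfallWeight p j * convergentFactor p (k, j)) := by
  have hballot : ((k : ℝ) + 2 * j + p + 1) * ballotCount (2 * (k + j) + p) 0 k =
      (2 * j + p + 1) * (2 * (k + j) + p).choose k := by
    have h := succ_mul_ballotCount_zero k (2 * j + p)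
    rw [show 2 * k + (2 * j + p) = 2 * (k + j) + p by ring] at h
    exact_mod_cast (by linarith)
  have hchoose : ((2 * (k + j) + p).choose (k + j) : ℝ) ≠ 0 := by
    exact_mod_cast (Nat.choose_pos (by lia)).ne'
  have hsqrt : √((k : ℝ) + j + 1) ^ 2 = k + j + 1 := sq_sqrt (by positivity)
  rw [totalFactor, shortfallWeight, convergentFactor, sqrt_div (by positivity), Nat.cast_mul,
    eq_div_of_mul_eq (by positivity) ((mul_comm _ _).trans hballot), pow_add 3,
    one_div_pow]
  push_cast
  field_simp
  rw [hsqrt]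

lemma walkCount_model_eq_totalFactor_mul_sum (m p : ℕ) (hp : p ≤ 1) :
    (walkCount 2 {![0, 1], ![1, -1], ![0, -1], ![-1, -1]} (2 * m + p) : ℝ) *
        (2 * √3) ^ (-((2 * m + p : ℕ) : ℤ)) * ((2 * m + p : ℕ) : ℝ) ^ 2 =
      totalFactor p m * (∑ kj ∈ antidiagonal m, shortfallWeight p kj.2 * convergentFactor p kj) /
        √3 ^ p := by
  have hpow : (2 * √3) ^ (2 * m + p) = 2 ^ (2 * m + p) * 3 ^ m * √3 ^ p := by
    rw [mul_pow, pow_add √3, pow_mul, sq_sqrt (by norm_num), mul_assoc]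
  rw [walkCount_model_eq_sum_antidiagonal m p hp, zpow_neg, zpow_natCast, hpow, mul_inv,
    ← mul_assoc, ← div_eq_mul_inv, div_mul_eq_mul_div, ← div_eq_mul_inv]
  congr 1
  rw [Nat.cast_sum, sum_div, sum_mul, mul_sum]
  refine sum_congr rfl fun kj hkj => ?_
  rw [← mem_antidiagonal.1 hkj, ballotCount_mul_motzkinCount_eq]

lemma isBigO_walkCount_model_sub (p : ℕ) (hp : p ≤ 1) :
    (fun m : ℕ => (walkCount 2 {![0, 1], ![1, -1], ![0, -1], ![-1, -1]} (2 * m + p) : ℝ) *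
        (2 * √3) ^ (-((2 * m + p : ℕ) : ℤ)) * ((2 * m + p : ℕ) : ℝ) ^ 2 -
          6 * √3 * (p + 2) / (√3 ^ p * π)) =O[⊤] fun m : ℕ => ((m : ℝ) + 1)⁻¹ := by
  refine ((isBigO_top_inv_succ_mul_sub_mul (isBigO_totalFactor_sub p)
    (isBigO_sum_antidiagonal_sub_mul_tsum (summable_abs_shortfallWeight_mul_pow p 5)
      (isBigO_convergentFactor_sub p))).const_mul_left (√3 ^ p)⁻¹).congr_left fun m => ?_
  rw [walkCount_model_eq_totalFactor_mul_sum m p hp, tsum_shortfallWeight]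
  field_simp
  rw [sq_sqrt pi_nonneg]
  ring

lemma exists_abs_le_div_of_isBigO_even_odd {f : ℕ → ℝ}
    (heven : (fun m => f (2 * m)) =O[⊤] fun m : ℕ => ((m : ℝ) + 1)⁻¹)
    (hodd : (fun m => f (2 * m + 1)) =O[⊤] fun m : ℕ => ((m : ℝ) + 1)⁻¹) :
    ∃ c : ℝ, 0 < c ∧ ∀ n : ℕ, 1 ≤ n → |f n| ≤ c / n := by
  obtain ⟨a, ha, heven⟩ := heven.exists_pos
  obtain ⟨b, hb, hodd⟩ := hodd.exists_pos
  rw [isBigOWith_top] at heven hodd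
  have hrate {m n : ℕ} (hn : 1 ≤ n) (hnm : n ≤ 2 * m + 1) : ‖((m : ℝ) + 1)⁻¹‖ ≤ 2 / n := by
    have hnm' : (n : ℝ) ≤ 2 * m + 1 := by exact_mod_cast hnm
    rw [norm_of_nonneg (by positivity), inv_eq_one_div,
      div_le_div_iff₀ (by positivity) (by exact_mod_cast hn)]
    linarith
  refine ⟨(a + b) * 2, by positivity, fun n hn => ?_⟩
  rw [mul_div_assoc]
  obtain ⟨m, rfl | rfl⟩ := n.even_or_odd'
  · calc |f (2 * m)| ≤ a * ‖((m : ℝ) + 1)⁻¹‖ := heven m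
      _ ≤ (a + b) * (2 / (2 * m : ℕ)) := by
        gcongr
        · linarith
        · exact hrate hn (by lia)
  · calc |f (2 * m + 1)| ≤ b * ‖((m : ℝ) + 1)⁻¹‖ := hodd m
      _ ≤ (a + b) * (2 / (2 * m + 1 : ℕ)) := by
        gcongr
        · linarith
        · exact hrate hn le_rfl

end Walks

theorem asymptotics_N_SE_S_SW :
    ∃ c : ℝ, 0 < c ∧ ∀ n : ℕ, 1 ≤ n →
      |(walkCount 2 {![0, 1], ![1, -1], ![0, -1], ![-1, -1]} n : ℝ)
          * (2 * Real.sqrt 3) ^ (-(n : ℤ)) * (n : ℝ) ^ 2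
        - (if Even n then 12 * Real.sqrt 3 / Real.pi else 18 / Real.pi)|
      ≤ c / n := by
  refine exists_abs_le_div_of_isBigO_even_odd ?_ ?_
  · refine (isBigO_walkCount_model_sub 0 zero_le_one).congr_left fun m => ?_
    have hconst : 6 * √3 * ((0 : ℕ) + 2) / (√3 ^ 0 * Real.pi) = 12 * √3 / Real.pi := by
      push_cast
      ring
    rw [hconst, if_pos (by simp), add_zero]
  · refine (isBigO_walkCount_model_sub 1 le_rfl).congr_left fun m => ?_
    have hconst : 6 * √3 * ((1 : ℕ) + 2) / (√3 ^ 1 * Real.pi) = 18 / Real.pi := by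
      field_simp
      norm_num
    rw [hconst, if_neg (by simp)]
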